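/- Assume T ≥ n and persistency of excitation, let R be a matrix whose columns form a basis of R* = V* ∩ S*, and let v satisfy X·K0·v ∈ Im(I_T ⊗ R). Then the attack input A_T = U·K0·v is undetectable over the horizon T: for every initial state x(0) and every nominal stacked input Ū_T, the output trajectory (y(0),…,y(T−1)) of the system driven by Ū_T + A_T equals the output trajectory driven by Ū_T alone. -/

import Mathlib

/-!
Because `X0 K0 v = 0`, weighting the experiments by `K0 v` produces a trajectory of the system
that starts at the origin, has input `U K0 v`, and has stacked states `X K0 v`. By hypothesis these
states lie in `Im R = V* ∩ S* ⊆ Ker C`, so the output of this trajectory vanishes; by superposition,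
adding its input to any nominal input leaves the output unchanged.
-/

open scoped Matrix Kronecker

namespace DiscreteLTI

section Behavior

variable {K E F G : Type*} [CommSemiring K] [AddCommMonoid E] [Module K E]
  [AddCommMonoid F] [Module K F] [AddCommMonoid G] [Module K G]

/-- The input-state behavior over the horizon `T`: the pairs `(u, x)` of an input and a state
signal with `x (t + 1) = A (x t) + B (u t)` for `t < T`. Signals are indexed by all of `ℕ`, but
inputs from time `T` on and states after time `T` are unconstrained. -/
def behavior (A : E →ₗ[K] E) (B : F →ₗ[K] E) (T : ℕ) : Submodule K ((ℕ → F) × (ℕ → E)) where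
  carrier := {s | ∀ t < T, s.2 (t + 1) = A (s.2 t) + B (s.1 t)}
  add_mem' {s s'} hs hs' t ht := by
    simp [hs t ht, hs' t ht, add_add_add_comm]
  zero_mem' t _ := by simp
  smul_mem' c s hs t ht := by simp [hs t ht]

/-- An attack `a` on the input is undetectable over the horizon `T` when, from every initial state
and for every nominal input, it leaves the outputs `C (x 0), …, C (x (T - 1))` unchanged. -/
def IsUndetectable (A : E →ₗ[K] E) (B : F →ₗ[K] E) (C : E →ₗ[K] G) (T : ℕ) (a : ℕ → F) : Prop :=
  ∀ ⦃u : ℕ → F⦄ ⦃x x' : ℕ → E⦄, (u, x) ∈ behavior A B T → (u + a, x') ∈ behavior A B T →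
    x' 0 = x 0 → ∀ t < T, C (x' t) = C (x t)

variable {A : E →ₗ[K] E} {B : F →ₗ[K] E} {C : E →ₗ[K] G} {T : ℕ}

theorem mem_behavior {u : ℕ → F} {x : ℕ → E} :
    (u, x) ∈ behavior A B T ↔ ∀ t < T, x (t + 1) = A (x t) + B (u t) :=
  Iff.rfl

theorem mem_behavior_congr_input {u u' : ℕ → F} {x : ℕ → E} (hu : ∀ t < T, u t = u' t) :
    (u, x) ∈ behavior A B T ↔ (u', x) ∈ behavior A B T := by
  rw [mem_behavior, mem_behavior]
  exact forall₂_congr fun t ht => by rw [hu t ht]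

theorem sum_smul_mem_behavior {ι : Type*} [Fintype ι] {u : ι → ℕ → F} {x : ι → ℕ → E}
    (h : ∀ i, (u i, x i) ∈ behavior A B T) (w : ι → K) :
    (∑ i, w i • u i, ∑ i, w i • x i) ∈ behavior A B T := by
  simpa only [Prod.smul_mk, prod_mk_sum] using
    Submodule.sum_smul_mem (behavior A B T) w fun i _ => h i

theorem state_eq_of_mem_behavior {u : ℕ → F} {x x' : ℕ → E} (hx : (u, x) ∈ behavior A B T)
    (hx' : (u, x') ∈ behavior A B T) (h0 : x 0 = x' 0) : ∀ t ≤ T, x t = x' t := by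
  intro t ht
  induction t with
  | zero => exact h0
  | succ t ih => rw [mem_behavior.mp hx t ht, mem_behavior.mp hx' t ht, ih (Nat.le_of_succ_le ht)]

theorem isUndetectable_of_zero_output {a : ℕ → F} {z : ℕ → E} (hz : (a, z) ∈ behavior A B T)
    (h0 : z 0 = 0) (hCz : ∀ t < T, C (z t) = 0) : IsUndetectable A B C T a := by
  intro u x x' hx hx' hinit t ht
  have hsuper : (u + a, x + z) ∈ behavior A B T := add_mem hx hz
  have hstate : x' t = x t + z t :=
    state_eq_of_mem_behavior hx' hsuper (by simp [hinit, h0]) t ht.le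
  rw [hstate, map_add, hCz t ht, add_zero]

end Behavior

section DataMatrices

variable {K : Type*} [CommSemiring K]

theorem mulVec_apply_eq_sum_smul_apply {r ι τ n : Type*} [Fintype ι] {M : Matrix r ι K}
    {x : ι → τ → n → K} {a : r} {t : τ} {j : n} (hM : ∀ i, M a i = x i t j) (w : ι → K) :
    (M *ᵥ w) a = (∑ i, w i • x i) t j := by
  simp [Matrix.mulVec, dotProduct, hM, mul_comm]

theorem mem_range_one_kronecker_mulVecLin {τ n q : Type*} [Fintype τ] [DecidableEq τ] [Fintype q]
    {R : Matrix n q K} {y : τ × n → K} :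
    y ∈ LinearMap.range ((1 : Matrix τ τ K) ⊗ₖ R).mulVecLin ↔
      ∀ t, (fun j => y (t, j)) ∈ LinearMap.range R.mulVecLin := by
  have hblock (c : τ × q → K) (t : τ) (j : n) :
      (((1 : Matrix τ τ K) ⊗ₖ R) *ᵥ c) (t, j) = (R *ᵥ fun k => c (t, k)) j := by
    simp [Matrix.mulVec, dotProduct, Fintype.sum_prod_type, Matrix.one_apply, ite_mul]
  constructor
  · rintro ⟨c, rfl⟩ t
    exact ⟨fun k => c (t, k), funext fun j => (hblock c t j).symm⟩
  · intro h
    choose c hc using h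
    exact ⟨fun tk => c tk.1 tk.2, funext fun tj => (hblock _ _ _).trans (congrFun (hc tj.1) tj.2)⟩

end DataMatrices

end DiscreteLTI

open DiscreteLTI in
theorem stmt_16_general {K ι n m p k q : Type*} [CommSemiring K] [Fintype ι] [Fintype n]
    [Fintype m] [Fintype k] [Fintype q] {T : ℕ}
    {A : Matrix n n K} {B : Matrix n m K} {C : Matrix p n K}
    {x : ι → ℕ → n → K} {u : ι → ℕ → m → K}
    (hdyn : ∀ i, (u i, x i) ∈ behavior A.mulVecLin B.mulVecLin T)
    {X0 : Matrix n ι K} (hX0 : ∀ j i, X0 j i = x i 0 j)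
    {U : Matrix (Fin T × m) ι K} (hU : ∀ (t : Fin T) j i, U (t, j) i = u i t j)
    {X : Matrix (Fin T × n) ι K} (hX : ∀ (t : Fin T) j i, X (t, j) i = x i (t + 1) j)
    {K0 : Matrix ι k K} (hK0 : LinearMap.range K0.mulVecLin ≤ LinearMap.ker X0.mulVecLin)
    {R : Matrix n q K} (hR : LinearMap.range R.mulVecLin ≤ LinearMap.ker C.mulVecLin)
    {v : k → K}
    (hv : (X * K0) *ᵥ v ∈ LinearMap.range ((1 : Matrix (Fin T) (Fin T) K) ⊗ₖ R).mulVecLin)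
    {atk : ℕ → m → K} (hatk : ∀ tj : Fin T × m, atk tj.1 tj.2 = ((U * K0) *ᵥ v) tj) :
    IsUndetectable A.mulVecLin B.mulVecLin C.mulVecLin T atk := by
  rw [← Matrix.mulVec_mulVec] at hv
  simp only [← Matrix.mulVec_mulVec] at hatk
  set w := K0 *ᵥ v
  set z := ∑ i, w i • x i
  have hz0 : z 0 = 0 := calc
    z 0 = X0 *ᵥ w := funext fun j => (mulVec_apply_eq_sum_smul_apply (hX0 j) w).symm
    _ = 0 := hK0 ⟨v, rfl⟩
  have hatk_eq (t : ℕ) (ht : t < T) : atk t = (∑ i, w i • u i) t := funext fun j =>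
    (hatk (⟨t, ht⟩, j)).trans (mulVec_apply_eq_sum_smul_apply (hU ⟨t, ht⟩ j) w)
  have hz : (atk, z) ∈ behavior A.mulVecLin B.mulVecLin T :=
    (mem_behavior_congr_input hatk_eq).mpr (sum_smul_mem_behavior hdyn w)
  have hz_range (t : Fin T) : z (t + 1) ∈ LinearMap.range R.mulVecLin := by
    convert mem_range_one_kronecker_mulVecLin.mp hv t using 1
    exact funext fun j => (mulVec_apply_eq_sum_smul_apply (hX t j) w).symm
  refine isUndetectable_of_zero_output hz hz0 fun t ht => ?_
  cases t with
  | zero => rw [hz0, map_zero]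
  | succ t => exact hR (hz_range ⟨t, Nat.lt_of_succ_lt ht⟩)

/-- undetectability of the data-driven attack A_T = U·K0·v when
X·K0·v ∈ Im(I_T ⊗ R), with R a basis matrix of R* = V* ∩ S*: for every initial
state and every nominal input, the output under the attacked input Ū_T + A_T
coincides with the nominal output over the horizon T. -/
theorem stmt_16
    (n m p N T : ℕ) (hT : n ≤ T)
    (A : Matrix (Fin n) (Fin n) ℝ) (B : Matrix (Fin n) (Fin m) ℝ)
    (C : Matrix (Fin p) (Fin n) ℝ)
    -- V* : largest (A, Im B)-controlled invariant subspace contained in Ker C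
    (Vstar : Submodule ℝ (Fin n → ℝ))
    (hVinv : ∀ v ∈ Vstar, A.mulVec v ∈ Vstar ⊔ LinearMap.range B.mulVecLin)
    (hVker : Vstar ≤ LinearMap.ker C.mulVecLin)
    (hVmax : ∀ W : Submodule ℝ (Fin n → ℝ),
      (∀ v ∈ W, A.mulVec v ∈ W ⊔ LinearMap.range B.mulVecLin) →
      W ≤ LinearMap.ker C.mulVecLin → W ≤ Vstar)
    -- S* : smallest (A, Ker C)-conditioned invariant subspace containing Im B
    (Sstar : Submodule ℝ (Fin n → ℝ))
    (hSinv : ∀ v ∈ Sstar ⊓ LinearMap.ker C.mulVecLin, A.mulVec v ∈ Sstar)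
    (hSim : LinearMap.range B.mulVecLin ≤ Sstar)
    (hSmin : ∀ W : Submodule ℝ (Fin n → ℝ),
      (∀ v ∈ W ⊓ LinearMap.ker C.mulVecLin, A.mulVec v ∈ W) →
      LinearMap.range B.mulVecLin ≤ W → Sstar ≤ W)
    -- data generated by N experiments of horizon T
    (x : Fin N → ℕ → Fin n → ℝ) (u : Fin N → ℕ → Fin m → ℝ)
    (hdyn : ∀ i t, x i (t + 1) = A.mulVec (x i t) + B.mulVec (u i t))
    (X0 : Matrix (Fin n) (Fin N) ℝ) (hX0 : ∀ j i, X0 j i = x i 0 j)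
    (U : Matrix (Fin T × Fin m) (Fin N) ℝ)
    (hU : ∀ (t : Fin T) (j : Fin m) (i : Fin N), U (t, j) i = u i t.val j)
    (X : Matrix (Fin T × Fin n) (Fin N) ℝ)
    (hX : ∀ (t : Fin T) (j : Fin n) (i : Fin N), X (t, j) i = x i (t.val + 1) j)
    -- persistency of excitation
    (hpe : (Matrix.fromRows X0 U).rank = n + m * T)
    -- K0: matrix whose columns form a basis of Ker X0
    (k0 : ℕ)
    (K0 : Matrix (Fin N) (Fin k0) ℝ)
    (hK0range : LinearMap.range K0.mulVecLin = LinearMap.ker X0.mulVecLin)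
    (hK0inj : Function.Injective K0.mulVecLin)
    -- R: matrix whose columns form a basis of R* = V* ∩ S*
    (q : ℕ) (R : Matrix (Fin n) (Fin q) ℝ)
    (hRrange : LinearMap.range R.mulVecLin = Vstar ⊓ Sstar)
    (hRinj : Function.Injective R.mulVecLin)
    -- the vector v with X·K0·v ∈ Im(I_T ⊗ R)
    (v : Fin k0 → ℝ)
    (hv : (X * K0).mulVec v ∈
      LinearMap.range (Matrix.kroneckerMap (· * ·)
        (1 : Matrix (Fin T) (Fin T) ℝ) R).mulVecLin)
    -- the attack input A_T = U·K0·v, unstacked over the horizon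
    (atk : ℕ → Fin m → ℝ)
    (hatk : ∀ tj : Fin T × Fin m, atk tj.1.val tj.2 = (U * K0).mulVec v tj) :
    -- for every initial state and nominal input, the attacked output equals
    -- the nominal output on {0,…,T−1}
    ∀ (xinit : Fin n → ℝ) (ubar : ℕ → Fin m → ℝ)
      (xnom xatk : ℕ → Fin n → ℝ),
      xnom 0 = xinit → xatk 0 = xinit →
      (∀ t, xnom (t + 1) = A.mulVec (xnom t) + B.mulVec (ubar t)) →
      (∀ t, xatk (t + 1) = A.mulVec (xatk t) + B.mulVec (ubar t + atk t)) →
      ∀ t < T, C.mulVec (xatk t) = C.mulVec (xnom t) :=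
  fun _ _ _ _ hnom0 hatk0 hnom hxatk =>
    stmt_16_general (fun i t _ => hdyn i t) hX0 hU hX hK0range.le
      (hRrange.trans_le (inf_le_left.trans hVker)) hv hatk
      (fun t _ => hnom t) (fun t _ => hxatk t) (hatk0.trans hnom0.symm)
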